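/- Let ℓ ≥ 3 and n be positive integers and let F be an edgewise maximal graph on n vertices with maximum degree at most 2 and girth at least ℓ (i.e., F ∈ F*^ℓ(n,2)). Then F is the vertex-disjoint union of cycles, each of length at least ℓ, together with at most one path, and if such a path is present its length k satisfies 0 ≤ k ≤ ℓ − 2. -/

import Mathlib

open Filter Finset SimpleGraph
open scoped Classical

/-- The degree of a vertex. -/
noncomputable def ndeg {V : Type*} (G : SimpleGraph V) (v : V) : ℕ :=
  (G.neighborSet v).ncard

/-- `F` belongs to `F^ℓ(n,2)`: maximum degree at most `2` and girth at least `ℓ`. -/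
def InFamily (n ℓ : ℕ) (F : SimpleGraph (Fin n)) : Prop :=
  (∀ v, ndeg F v ≤ 2) ∧ (ℓ : ℕ∞) ≤ F.girth

/-- `F` belongs to `F*^ℓ(n,2)`: an edgewise maximal member of `F^ℓ(n,2)`. -/
def EdgeMaximal (n ℓ : ℕ) (F : SimpleGraph (Fin n)) : Prop :=
  InFamily n ℓ F ∧ ∀ F' : SimpleGraph (Fin n), F ≤ F' → InFamily n ℓ F' → F' = F

/-!
Joining two non-adjacent vertices `x`, `y` of degree less than `d` keeps all degrees at most `d`,
and every cycle it creates consists of the new edge and a path of `F` from `x` to `y`. So if `F` is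
edgewise maximal of girth at least `ℓ`, then `edist x y + 1 < ℓ`; in particular, for `d = 2` and
`3 ≤ ℓ`, any two vertices of degree at most `1` are joined by a path of length at most `ℓ - 2`. Such
a path already uses up all the degrees of its vertices, so it is a whole component, and a third
vertex of degree at most `1` cannot exist.
-/

section Walks

variable {V : Type*} {G : SimpleGraph V} {x y z : V}

theorem edist_deleteEdges_add_one_le_of_snd_eq {c : G.Walk x x} (hc : c.IsCycle)
    (hy : c.snd = y) : (G.deleteEdges {s(x, y)}).edist x y + 1 ≤ c.length := by
  subst hy
  have hnil := hc.not_nil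
  rw [← c.cons_tail_eq hnil, Walk.cons_isCycle_iff] at hc
  have havoid : ∀ e ∈ c.tail.edges, e ∉ ({s(x, c.snd)} : Set (Sym2 V)) := by
    rintro e he rfl
    exact hc.2 he
  rw [← Walk.length_tail_add_one hnil, Nat.cast_add_one, edist_comm]
  gcongr
  simpa using edist_le (c.tail.toDeleteEdges _ havoid)

theorem edist_deleteEdges_add_one_le_of_mem_edges {c : G.Walk z z} (hc : c.IsCycle)
    (hxy : s(x, y) ∈ c.edges) : (G.deleteEdges {s(x, y)}).edist x y + 1 ≤ c.length := by
  have hx : x ∈ c.support := c.fst_mem_support_of_mem_edges hxy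
  have hc' := hc.rotate hx
  have hy : y ∈ (c.rotate x hx).toSubgraph.neighborSet x := by
    rw [Subgraph.mem_neighborSet, ← Subgraph.mem_edgeSet, Walk.mem_edges_toSubgraph]
    exact (c.rotate_edges x hx).mem_iff.2 hxy
  rw [hc'.neighborSet_toSubgraph_endpoint] at hy
  rcases hy with hsnd | hpenultimate
  · simpa using edist_deleteEdges_add_one_le_of_snd_eq hc' hsnd.symm
  · simpa using edist_deleteEdges_add_one_le_of_snd_eq hc'.reverse
      ((Walk.snd_reverse _).trans hpenultimate.symm)

theorem min_egirth_edist_add_one_le_egirth_sup_edge (G : SimpleGraph V) (x y : V) :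
    min G.egirth (G.edist x y + 1) ≤ (G ⊔ edge x y).egirth := by
  have hdelete : (G ⊔ edge x y).deleteEdges {s(x, y)} ≤ G := by
    intro a b hab
    simp only [deleteEdges_adj, sup_adj, edge_adj, Set.mem_singleton_iff, Sym2.eq_iff] at hab
    tauto
  refine le_egirth.2 fun a c hc ↦ ?_
  by_cases hxy : s(x, y) ∈ c.edges
  · calc min G.egirth (G.edist x y + 1)
        ≤ G.edist x y + 1 := min_le_right _ _
      _ ≤ ((G ⊔ edge x y).deleteEdges {s(x, y)}).edist x y + 1 := by
          gcongr
      _ ≤ c.length := edist_deleteEdges_add_one_le_of_mem_edges hc hxy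
  · have havoid : ∀ e ∈ c.edges, e ∉ ({s(x, y)} : Set (Sym2 V)) := by
      rintro e he rfl
      exact hxy he
    calc min G.egirth (G.edist x y + 1)
        ≤ G.egirth := min_le_left _ _
      _ ≤ ((G ⊔ edge x y).deleteEdges {s(x, y)}).egirth := egirth_anti hdelete
      _ ≤ c.length := by simpa using egirth_le_length (Walk.IsCycle.toDeleteEdges _ _ hc havoid)

end Walks

section Degrees

variable {V : Type*} {G : SimpleGraph V} {u v x y : V}

/-- The degree of a vertex as an extended natural number, used for graphs on arbitrary vertex types:
unlike `ndeg`, it is `⊤` rather than `0` at a vertex with infinitely many neighbours. -/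
noncomputable def edeg (G : SimpleGraph V) (v : V) : ℕ∞ :=
  (G.neighborSet v).encard

theorem edeg_eq_coe_ndeg [Finite V] (G : SimpleGraph V) (v : V) : edeg G v = ndeg G v :=
  (Set.toFinite _).cast_ncard_eq.symm

theorem edeg_sup_edge_left_le (G : SimpleGraph V) (x y : V) :
    edeg (G ⊔ edge x y) x ≤ edeg G x + 1 := by
  have hsub : (G ⊔ edge x y).neighborSet x ⊆ insert y (G.neighborSet x) := by
    intro z hz
    simp only [mem_neighborSet, sup_adj, edge_adj, Set.mem_insert_iff] at hz ⊢
    grind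
  exact (Set.encard_le_encard hsub).trans (Set.encard_insert_le _ _)

theorem edeg_sup_edge_of_ne (hx : v ≠ x) (hy : v ≠ y) : edeg (G ⊔ edge x y) v = edeg G v := by
  have hnbhd : (G ⊔ edge x y).neighborSet v = G.neighborSet v := by
    ext z
    simp [edge_adj, hx, hy]
  rw [edeg, hnbhd, edeg]

theorem edeg_sup_edge_le {d : ℕ∞} (hG : ∀ v, edeg G v ≤ d) (hx : edeg G x < d)
    (hy : edeg G y < d) (v : V) : edeg (G ⊔ edge x y) v ≤ d := by
  by_cases hvx : v = x
  · subst hvx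
    exact (edeg_sup_edge_left_le G v y).trans (Order.add_one_le_of_lt hx)
  by_cases hvy : v = y
  · subst hvy
    rw [edge_comm]
    exact (edeg_sup_edge_left_le G v x).trans (Order.add_one_le_of_lt hy)
  · exact (edeg_sup_edge_of_ne hvx hvy).trans_le (hG v)

theorem edeg_le_encard_neighborSet_toSubgraph {w : G.Walk u v} (hw : w.IsPath) (huv : u ≠ v)
    (hdeg : ∀ x ∈ w.support, edeg G x ≤ 2) (hu : edeg G u ≤ 1) (hv : edeg G v ≤ 1)
    (hx : x ∈ w.support) : edeg G x ≤ (w.toSubgraph.neighborSet x).encard := by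
  have hnil : ¬ w.Nil := Walk.not_nil_of_ne huv
  by_cases hxu : x = u
  · subst hxu
    rwa [hw.neighborSet_toSubgraph_startpoint hnil, Set.encard_singleton]
  by_cases hxv : x = v
  · subst hxv
    rwa [hw.neighborSet_toSubgraph_endpoint hnil, Set.encard_singleton]
  obtain ⟨i, rfl, hi⟩ := Walk.mem_support_iff_exists_getVert.1 hx
  have hi₀ : i ≠ 0 := by
    rintro rfl
    exact hxu w.getVert_zero
  have hi₁ : i ≠ w.length := by
    rintro rfl
    exact hxv w.getVert_length
  rw [← w.finite_neighborSet_toSubgraph.cast_ncard_eq,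
    hw.ncard_neighborSet_toSubgraph_internal_eq_two hi₀ (hi.lt_of_ne hi₁)]
  exact hdeg _ hx

theorem mem_support_of_isPath_of_reachable {w : G.Walk u v} (hw : w.IsPath) (huv : u ≠ v)
    (hdeg : ∀ x ∈ w.support, edeg G x ≤ 2) (hu : edeg G u ≤ 1) (hv : edeg G v ≤ 1)
    (hux : G.Reachable u x) : x ∈ w.support := by
  by_contra hx
  obtain ⟨q⟩ := hux
  obtain ⟨e, -, hfst, hsnd⟩ := q.exists_boundary_dart {a | a ∈ w.support} w.start_mem_support hx
  have hnbhd : w.toSubgraph.neighborSet e.fst = G.neighborSet e.fst :=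
    w.finite_neighborSet_toSubgraph.eq_of_subset_of_encard_le
      (w.toSubgraph.neighborSet_subset _)
      (edeg_le_encard_neighborSet_toSubgraph hw huv hdeg hu hv hfst)
  have hadj : w.toSubgraph.Adj e.fst e.snd := by
    rw [← Subgraph.mem_neighborSet, hnbhd]
    exact e.adj
  exact hsnd (w.mem_verts_toSubgraph.1 hadj.snd_mem)

end Degrees

section Maximal

variable {V : Type*} {F : SimpleGraph V} {d : ℕ∞} {x y : V}

/-- The family `F^ℓ(V, d)` on an arbitrary vertex type: maximum degree at most `d` and girth at
least `ℓ`. The girth is measured by `egirth`, which is `⊤` on acyclic graphs, so that forests may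
belong to the family. Its edgewise maximal members are those that are `Maximal` for `≤`. -/
def DegreeLEGirthGE (d ℓ : ℕ∞) (G : SimpleGraph V) : Prop :=
  (∀ v, edeg G v ≤ d) ∧ ℓ ≤ G.egirth

theorem edist_add_one_lt_of_maximal {ℓ : ℕ∞} (hF : Maximal (DegreeLEGirthGE d ℓ) F)
    (hxy : x ≠ y) (hadj : ¬ F.Adj x y) (hx : edeg F x < d) (hy : edeg F y < d) :
    F.edist x y + 1 < ℓ := by
  by_contra! hle
  have hmem : DegreeLEGirthGE d ℓ (F ⊔ edge x y) :=
    ⟨edeg_sup_edge_le hF.prop.1 hx hy,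
      (le_min hF.prop.2 hle).trans (min_egirth_edist_add_one_le_egirth_sup_edge F x y)⟩
  exact hF.not_prop_of_gt (F.lt_sup_edge x y hxy hadj) hmem

theorem exists_isPath_length_le_of_maximal {ℓ : ℕ} (hℓ : 3 ≤ ℓ)
    (hF : Maximal (DegreeLEGirthGE d ℓ) F) (hxy : x ≠ y) (hx : edeg F x < d)
    (hy : edeg F y < d) : ∃ p : F.Walk x y, p.IsPath ∧ p.length ≤ ℓ - 2 := by
  have hdist : F.edist x y + 1 < ℓ := by
    by_cases hadj : F.Adj x y
    · rw [edist_eq_one_iff_adj.2 hadj]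
      exact_mod_cast hℓ
    · exact edist_add_one_lt_of_maximal hF hxy hadj hx hy
  have hreach : F.Reachable x y :=
    reachable_of_edist_ne_top (ne_top_of_lt (le_self_add.trans_lt hdist))
  obtain ⟨p, hp, hlen⟩ := hreach.exists_path_of_dist
  rw [← hreach.coe_dist_eq_edist, ← hlen] at hdist
  norm_cast at hdist
  exact ⟨p, hp, by omega⟩

/-- For infinite `V`, a path of length `0` at a vertex of degree `1` stands for the end of a ray. -/
theorem structure_of_edge_maximal_general {ℓ : ℕ} (hℓ : 3 ≤ ℓ)
    (hF : Maximal (DegreeLEGirthGE 2 ℓ) F) :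
    (∀ (v : V) (c : F.Walk v v), c.IsCycle → ℓ ≤ c.length) ∧
    ((∀ v, edeg F v = 2) ∨
      ∃ (u v : V) (w : F.Walk u v), w.IsPath ∧ w.length ≤ ℓ - 2 ∧
        edeg F u ≤ 1 ∧ edeg F v ≤ 1 ∧ ∀ x, x ∉ w.support → edeg F x = 2) := by
  obtain ⟨hdeg, hgirth⟩ := hF.prop
  refine ⟨fun v c hc ↦ by exact_mod_cast hgirth.trans (egirth_le_length hc), ?_⟩
  have hle_one {v : V} (hv : edeg F v < 2) : edeg F v ≤ 1 := Order.le_of_lt_add_one hv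
  by_cases! hall : ∀ v, edeg F v = 2
  · exact .inl hall
  obtain ⟨u, hu⟩ := hall
  replace hu := (hdeg u).lt_of_ne hu
  right
  by_cases! hother : ∃ v, u ≠ v ∧ edeg F v < 2
  · obtain ⟨v, huv, hv⟩ := hother
    obtain ⟨w, hw, hlen⟩ := exists_isPath_length_le_of_maximal hℓ hF huv hu hv
    refine ⟨u, v, w, hw, hlen, hle_one hu, hle_one hv, fun x hx ↦ ?_⟩
    by_contra hx₂
    have hux : u ≠ x := fun h ↦ hx (h ▸ w.start_mem_support)
    obtain ⟨q, -⟩ :=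
      exists_isPath_length_le_of_maximal hℓ hF hux hu ((hdeg x).lt_of_ne hx₂)
    exact hx (mem_support_of_isPath_of_reachable hw huv (fun a _ ↦ hdeg a) (hle_one hu)
      (hle_one hv) q.reachable)
  · refine ⟨u, u, .nil, .nil, by simp, hle_one hu, hle_one hu, fun x hx ↦ ?_⟩
    exact (hdeg x).antisymm (hother x (by simpa [eq_comm] using hx))

end Maximal

/-- Acyclic graphs have `girth = 0`, so the members of `InFamily` are the graphs of `F^ℓ(n,2)` that
contain a cycle. -/
theorem inFamily_iff {n ℓ : ℕ} (hℓ : 0 < ℓ) {F : SimpleGraph (Fin n)} :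
    InFamily n ℓ F ↔ DegreeLEGirthGE 2 ℓ F ∧ ¬ F.IsAcyclic := by
  have hdeg : (∀ v, edeg F v ≤ 2) ↔ ∀ v, ndeg F v ≤ 2 := by
    simp only [edeg_eq_coe_ndeg]
    norm_cast
  by_cases hF : F.IsAcyclic
  · simp [InFamily, girth_eq_zero.2 hF, hF, hℓ.ne']
  · have hgirth : (F.girth : ℕ∞) = F.egirth := ENat.natCast_toNat (egirth_eq_top.not.2 hF)
    simp [InFamily, DegreeLEGirthGE, hdeg, hgirth, hF]

theorem maximal_of_edgeMaximal {n ℓ : ℕ} (hℓ : 0 < ℓ) {F : SimpleGraph (Fin n)}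
    (hF : EdgeMaximal n ℓ F) : Maximal (DegreeLEGirthGE 2 ℓ) F := by
  obtain ⟨hmem, hmax⟩ := hF
  rw [inFamily_iff hℓ] at hmem
  refine ⟨hmem.1, fun F' hF' hle ↦ (hmax F' hle ?_).le⟩
  exact (inFamily_iff hℓ).2 ⟨hF', fun hacyc ↦ hmem.2 (hacyc.anti hle)⟩

/-- Every `F ∈ F*^ℓ(n,2)` is a vertex-disjoint union of cycles, each of length at least
`ℓ`, together with at most one path, of length at most `ℓ - 2` if present.  (Since `F` has
maximum degree at most `2`, this is expressed as: every cycle of `F` has length at least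
`ℓ`, and either every vertex has degree `2` — all components are cycles — or there is a
path of length at most `ℓ - 2` whose endpoints have degree at most `1` in `F` and such
that every vertex off this path has degree `2`.) -/
theorem structure_of_edge_maximal
    (ℓ n : ℕ) (hℓ : 3 ≤ ℓ) (hn : 0 < n)
    (F : SimpleGraph (Fin n)) (hF : EdgeMaximal n ℓ F) :
    (∀ (v : Fin n) (c : F.Walk v v), c.IsCycle → ℓ ≤ c.length) ∧
    ((∀ v, ndeg F v = 2) ∨
      ∃ (u v : Fin n) (w : F.Walk u v), w.IsPath ∧ w.length ≤ ℓ - 2 ∧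
        ndeg F u ≤ 1 ∧ ndeg F v ≤ 1 ∧ ∀ x : Fin n, x ∉ w.support → ndeg F x = 2) := by
  have h := structure_of_edge_maximal_general hℓ (maximal_of_edgeMaximal (by omega) hF)
  simp only [edeg_eq_coe_ndeg] at h
  exact_mod_cast h
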